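/- Let H be a quasi-bialgebra and let A be a left H-module equipped with a k-bilinear multiplication. Define a multiplication on the vector space A⊗H by (a⊗h)(a′⊗h′) = (x¹·a)(x²h₁·a′) ⊗ x³h₂h′, where Φ⁻¹ = x¹⊗x²⊗x³, and assume this multiplication is associative. If moreover A has a unit 1_A satisfying h·1_A = ε(h)1_A for all h ∈ H, then h·(ab) = (h₁·a)(h₂·b) for all h ∈ H and a, b ∈ A; consequently A is a left H-module algebra and the above multiplication on A⊗H is that of the smash product A#H. -/

import Mathlib

open TensorProduct BigOperators

/-- A quasi-bialgebra in the sense of Drinfeld. -/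
structure QuasiBialgebra (k H : Type*) [Field k] [Ring H] [Algebra k H] where
  comul : H →ₐ[k] H ⊗[k] H
  counit : H →ₐ[k] k
  Phi : H ⊗[k] (H ⊗[k] H)
  PhiInv : H ⊗[k] (H ⊗[k] H)
  Phi_mul_inv : Phi * PhiInv = 1
  inv_mul_Phi : PhiInv * Phi = 1
  comul_coassoc : ∀ h : H,
    (Algebra.TensorProduct.map (AlgHom.id k H) comul) (comul h)
      = Phi * (Algebra.TensorProduct.assoc k k k H H H)
          ((Algebra.TensorProduct.map comul (AlgHom.id k H)) (comul h)) * PhiInv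
  counit_comul_right : ∀ h : H,
    (Algebra.TensorProduct.map (AlgHom.id k H) counit) (comul h) = h ⊗ₜ[k] (1 : k)
  counit_comul_left : ∀ h : H,
    (Algebra.TensorProduct.map counit (AlgHom.id k H)) (comul h) = (1 : k) ⊗ₜ[k] h
  pentagon :
    ((1 : H) ⊗ₜ[k] Phi)
      * (Algebra.TensorProduct.map (AlgHom.id k H)
          (((Algebra.TensorProduct.assoc k k k H H H).toAlgHom).comp
            (Algebra.TensorProduct.map comul (AlgHom.id k H)))) Phi
      * (Algebra.TensorProduct.map (AlgHom.id k H)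
          (Algebra.TensorProduct.map (AlgHom.id k H)
            (Algebra.TensorProduct.includeLeft : H →ₐ[k] H ⊗[k] H))) Phi
    = (Algebra.TensorProduct.map (AlgHom.id k H)
          (Algebra.TensorProduct.map (AlgHom.id k H) comul)) Phi
      * (Algebra.TensorProduct.assoc k k k H H (H ⊗[k] H))
          ((Algebra.TensorProduct.map comul (AlgHom.id k (H ⊗[k] H))) Phi)
  counit_Phi : (Algebra.TensorProduct.map (AlgHom.id k H)
      (Algebra.TensorProduct.map counit (AlgHom.id k H))) Phi = 1

/-- A quasi-Hopf algebra: a quasi-bialgebra with antipode `S` (a bijective algebra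
anti-automorphism with inverse `Sinv`) and elements `alpha`, `beta`, normalized so that
`counit alpha = counit beta = 1`.  Identities involving Sweedler components are stated
universally over all finite representations of the relevant tensors. -/
structure QuasiHopfAlgebra (k H : Type*) [Field k] [Ring H] [Algebra k H] extends
    QuasiBialgebra k H where
  alpha : H
  beta : H
  S : H →ₗ[k] H
  Sinv : H →ₗ[k] H
  S_one : S 1 = 1
  S_mul : ∀ a b : H, S (a * b) = S b * S a
  Sinv_S : ∀ h : H, Sinv (S h) = h
  S_Sinv : ∀ h : H, S (Sinv h) = h
  antipode_left : ∀ h : H, ∀ (n : ℕ) (d1 d2 : Fin n → H),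
    comul h = ∑ i, d1 i ⊗ₜ[k] d2 i →
    ∑ i, S (d1 i) * alpha * d2 i = counit h • alpha
  antipode_right : ∀ h : H, ∀ (n : ℕ) (d1 d2 : Fin n → H),
    comul h = ∑ i, d1 i ⊗ₜ[k] d2 i →
    ∑ i, d1 i * beta * S (d2 i) = counit h • beta
  antipode_Phi : ∀ (n : ℕ) (X1 X2 X3 : Fin n → H),
    Phi = ∑ i, X1 i ⊗ₜ[k] (X2 i ⊗ₜ[k] X3 i) →
    ∑ i, X1 i * beta * S (X2 i) * alpha * X3 i = 1
  antipode_PhiInv : ∀ (n : ℕ) (x1 x2 x3 : Fin n → H),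
    PhiInv = ∑ i, x1 i ⊗ₜ[k] (x2 i ⊗ₜ[k] x3 i) →
    ∑ i, S (x1 i) * alpha * x2 i * beta * S (x3 i) = 1
  counit_alpha : counit alpha = 1
  counit_beta : counit beta = 1

section helpers
variable {k H A : Type*} [Field k] [Ring H] [Algebra k H]

theorem exists_rep2 (t : H ⊗[k] H) :
    ∃ (n : ℕ) (x y : Fin n → H), t = ∑ i, x i ⊗ₜ[k] y i := by
  induction t with
  | zero => exact ⟨0, Fin.elim0, Fin.elim0, by simp⟩
  | tmul a b => exact ⟨1, fun _ => a, fun _ => b, by simp⟩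
  | add s t hs ht =>
    obtain ⟨n, x, y, rfl⟩ := hs
    obtain ⟨m, x', y', rfl⟩ := ht
    exact ⟨n + m, Fin.append x x', Fin.append y y', by simp [Fin.sum_univ_add]⟩

theorem exists_rep3 (t : H ⊗[k] (H ⊗[k] H)) :
    ∃ (n : ℕ) (x y z : Fin n → H), t = ∑ i, x i ⊗ₜ[k] (y i ⊗ₜ[k] z i) := by
  induction t with
  | zero => exact ⟨0, Fin.elim0, Fin.elim0, Fin.elim0, by simp⟩
  | tmul a b =>
    obtain ⟨n, x, y, rfl⟩ := exists_rep2 b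
    exact ⟨n, fun _ => a, x, y, by simp [TensorProduct.tmul_sum]⟩
  | add s t hs ht =>
    obtain ⟨n, x, y, z, rfl⟩ := hs
    obtain ⟨m, x', y', z', rfl⟩ := ht
    exact ⟨n + m, Fin.append x x', Fin.append y y', Fin.append z z',
      by simp [Fin.sum_univ_add]⟩

/-- Apply the counit to the left factor. -/
noncomputable def epsL (e : H →ₐ[k] k) (B : Type*) [Ring B] [Algebra k B] :
    H ⊗[k] B →ₐ[k] B :=
  (Algebra.TensorProduct.lid k B).toAlgHom.comp
    (Algebra.TensorProduct.map e (AlgHom.id k B))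

/-- Apply the counit to the right factor. -/
noncomputable def epsR (e : H →ₐ[k] k) (B : Type*) [Ring B] [Algebra k B] :
    B ⊗[k] H →ₐ[k] B :=
  (Algebra.TensorProduct.rid k k B).toAlgHom.comp
    (Algebra.TensorProduct.map (AlgHom.id k B) e)

theorem epsL_tmul (e : H →ₐ[k] k) (B : Type*) [Ring B] [Algebra k B] (h : H) (b : B) :
    epsL e B (h ⊗ₜ b) = e h • b := by
  simp [epsL]

theorem epsR_tmul (e : H →ₐ[k] k) (B : Type*) [Ring B] [Algebra k B] (h : H) (b : B) :
    epsR e B (b ⊗ₜ h) = e h • b := by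
  simp [epsR]

theorem epsL_comul (Q : QuasiBialgebra k H) (h : H) : epsL Q.counit H (Q.comul h) = h := by
  simp [epsL, Q.counit_comul_left]

theorem epsR_comul (Q : QuasiBialgebra k H) (h : H) : epsR Q.counit H (Q.comul h) = h := by
  simp [epsR, Q.counit_comul_right]

theorem eps_Phi_mid (Q : QuasiBialgebra k H) :
    (Algebra.TensorProduct.map (AlgHom.id k H) (epsL Q.counit H)) Q.Phi = 1 := by
  have h := congrArg (Algebra.TensorProduct.map (AlgHom.id k H)
    (Algebra.TensorProduct.lid k H).toAlgHom) Q.counit_Phi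
  rw [map_one] at h
  rw [← h]
  obtain ⟨n, x, y, z, hx⟩ := exists_rep3 Q.Phi
  rw [hx]
  simp [epsL_tmul]

theorem eq_one_of_idem {B C : Type*} [Ring B] [Algebra k B] [Ring C] [Algebra k C]
    (f : B →ₐ[k] C) (x y : B) (hxy : x * y = 1) (hyx : y * x = 1)
    (h : f x * f x = f x) : f y = 1 := by
  have h1 : f x = 1 := by
    calc f x = f y * f x * f x := by rw [← map_mul, hyx, map_one, one_mul]
      _ = 1 := by rw [mul_assoc, h, ← map_mul, hyx, map_one]
  calc f y = f x * f y := by rw [h1, one_mul]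
    _ = 1 := by rw [← map_mul, hxy, map_one]

theorem epsL_PhiInv (Q : QuasiBialgebra k H) :
    epsL Q.counit (H ⊗[k] H) Q.PhiInv = 1 := by
  apply eq_one_of_idem _ _ _ Q.Phi_mul_inv Q.inv_mul_Phi
  have hm := congrArg (epsL Q.counit H) (eps_Phi_mid Q)
  have hp := congrArg (epsL Q.counit (H ⊗[k] H)) 
    (congrArg (epsL Q.counit (H ⊗[k] (H ⊗[k] H))) Q.pentagon)
  obtain ⟨n, x, y, z, hx⟩ := exists_rep3 Q.Phi
  have aux1 : ∀ (t : H ⊗[k] H) (g : H), epsL Q.counit (H ⊗[k] H)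
      ((Algebra.TensorProduct.assoc k k k H H H) (t ⊗ₜ g)) = epsL Q.counit H t ⊗ₜ g := by
    intro t g
    induction t with
    | zero => simp
    | tmul a b => simp [epsL_tmul, TensorProduct.smul_tmul']
    | add s t hs ht => simp only [TensorProduct.add_tmul, map_add, hs, ht]
  have aux2 : ∀ (t : H ⊗[k] H) (g : H ⊗[k] H), epsL Q.counit (H ⊗[k] H)
      (epsL Q.counit (H ⊗[k] (H ⊗[k] H))
        ((Algebra.TensorProduct.assoc k k k H H (H ⊗[k] H)) (t ⊗ₜ g)))
        = Q.counit (epsL Q.counit H t) • g := by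
    intro t g
    induction t with
    | zero => simp
    | tmul a b => simp [epsL_tmul, mul_smul]
    | add s t hs ht => simp only [TensorProduct.add_tmul, map_add, hs, ht, add_smul]
  have h1 : ∑ i, (Q.counit (x i) * Q.counit (y i)) • z i = 1 := by
    rw [hx] at hm
    simpa [epsL_tmul, smul_smul, mul_comm] using hm
  have t1 : epsL Q.counit (H ⊗[k] H) (epsL Q.counit (H ⊗[k] (H ⊗[k] H))
     ((1 : H) ⊗ₜ[k] Q.Phi)) = epsL Q.counit (H ⊗[k] H) Q.Phi := by
    simp [epsL_tmul]
  have t2 : epsL Q.counit (H ⊗[k] H) (epsL Q.counit (H ⊗[k] (H ⊗[k] H))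
     ((Algebra.TensorProduct.map (AlgHom.id k H)
          (((Algebra.TensorProduct.assoc k k k H H H).toAlgHom).comp
            (Algebra.TensorProduct.map Q.comul (AlgHom.id k H)))) Q.Phi))
       = epsL Q.counit (H ⊗[k] H) Q.Phi := by
    rw [hx]
    simp [epsL_tmul, aux1, epsL_comul]
  have t3 : epsL Q.counit (H ⊗[k] H) (epsL Q.counit (H ⊗[k] (H ⊗[k] H))
     ((Algebra.TensorProduct.map (AlgHom.id k H)
          (Algebra.TensorProduct.map (AlgHom.id k H)
            (Algebra.TensorProduct.includeLeft : H →ₐ[k] H ⊗[k] H))) Q.Phi)) = 1 := by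
    have := congrArg (fun u : H => u ⊗ₜ[k] (1 : H)) h1
    simp only [TensorProduct.sum_tmul] at this
    rw [hx]
    simpa [epsL_tmul, smul_smul, TensorProduct.smul_tmul',
      Algebra.TensorProduct.one_def] using this
  have t4 : epsL Q.counit (H ⊗[k] H) (epsL Q.counit (H ⊗[k] (H ⊗[k] H))
     ((Algebra.TensorProduct.map (AlgHom.id k H)
          (Algebra.TensorProduct.map (AlgHom.id k H) Q.comul)) Q.Phi)) = 1 := by
    have := congrArg Q.comul h1
    rw [hx]
    simpa [epsL_tmul, smul_smul] using this
  have t5 : epsL Q.counit (H ⊗[k] H) (epsL Q.counit (H ⊗[k] (H ⊗[k] H))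
     ((Algebra.TensorProduct.assoc k k k H H (H ⊗[k] H))
          ((Algebra.TensorProduct.map Q.comul (AlgHom.id k (H ⊗[k] H))) Q.Phi)))
       = epsL Q.counit (H ⊗[k] H) Q.Phi := by
    rw [hx]
    simp [epsL_tmul, aux2, epsL_comul]
  simp only [map_mul] at hp
  rw [t1, t2, t3, t4, t5] at hp
  simpa using hp

/-- Apply the counit to the third factor of a threefold tensor. -/
noncomputable def epsT (Q : QuasiBialgebra k H) : H ⊗[k] (H ⊗[k] H) →ₐ[k] H ⊗[k] H :=
  Algebra.TensorProduct.map (AlgHom.id k H) (epsR Q.counit H)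

/-- Apply the counit to the third and fourth factors. -/
noncomputable def epsTT (Q : QuasiBialgebra k H) :
    H ⊗[k] (H ⊗[k] (H ⊗[k] H)) →ₐ[k] H ⊗[k] H :=
  (epsT Q).comp (Algebra.TensorProduct.map (AlgHom.id k H) (epsT Q))

theorem epsT_PhiInv (Q : QuasiBialgebra k H) : epsT Q Q.PhiInv = 1 := by
  apply eq_one_of_idem _ _ _ Q.Phi_mul_inv Q.inv_mul_Phi
  have hm := congrArg (epsR Q.counit H) (eps_Phi_mid Q)
  have hp := congrArg (epsTT Q) Q.pentagon
  obtain ⟨n, x, y, z, hx⟩ := exists_rep3 Q.Phi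
  have aux0 : ∀ (t : H ⊗[k] H) (g : H), epsT Q
      ((Algebra.TensorProduct.assoc k k k H H H) (t ⊗ₜ g)) = Q.counit g • t := by
    intro t g
    induction t with
    | zero => simp
    | tmul a b => simp [epsR_tmul, epsT]
    | add s t hs ht => simp only [TensorProduct.add_tmul, map_add, hs, ht, smul_add]
  have aux2 : ∀ (t : H ⊗[k] H) (a b : H), epsTT Q
        ((Algebra.TensorProduct.assoc k k k H H (H ⊗[k] H)) (t ⊗ₜ (a ⊗ₜ b)))
        = (Q.counit a * Q.counit b) • t := by
    intro t a b
    induction t with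
    | zero => simp
    | tmul c d => simp [epsR_tmul, epsTT, epsT, smul_smul, mul_comm]
    | add s t hs ht => simp only [TensorProduct.add_tmul, map_add, hs, ht, smul_add]
  have h1 : ∑ i, (Q.counit (y i) * Q.counit (z i)) • x i = 1 := by
    rw [hx] at hm
    simpa [epsL_tmul, epsR_tmul, smul_smul, mul_comm] using hm
  have t1 : epsTT Q ((1 : H) ⊗ₜ[k] Q.Phi) = 1 := by
    have := congrArg (fun u : H => (1 : H) ⊗ₜ[k] u) h1
    simp only [TensorProduct.tmul_sum] at this
    rw [hx]
    simpa [epsTT, epsT, epsR_tmul, smul_smul, TensorProduct.tmul_sum, mul_comm,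
      Algebra.TensorProduct.one_def] using this
  have t2 : epsTT Q
     ((Algebra.TensorProduct.map (AlgHom.id k H)
          (((Algebra.TensorProduct.assoc k k k H H H).toAlgHom).comp
            (Algebra.TensorProduct.map Q.comul (AlgHom.id k H)))) Q.Phi)
       = epsT Q Q.Phi := by
    rw [hx]
    simp [epsTT, aux0]
    simp [epsT, epsR_tmul, epsR_comul]
  have t3 : epsTT Q
     ((Algebra.TensorProduct.map (AlgHom.id k H)
          (Algebra.TensorProduct.map (AlgHom.id k H)
            (Algebra.TensorProduct.includeLeft : H →ₐ[k] H ⊗[k] H))) Q.Phi)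
       = epsT Q Q.Phi := by
    rw [hx]
    simp [epsTT, epsT, epsR_tmul]
  have t4 : epsTT Q
     ((Algebra.TensorProduct.map (AlgHom.id k H)
          (Algebra.TensorProduct.map (AlgHom.id k H) Q.comul)) Q.Phi) = epsT Q Q.Phi := by
    rw [hx]
    simp [epsTT, epsT, epsR_tmul, epsR_comul]
  have t5 : epsTT Q
     ((Algebra.TensorProduct.assoc k k k H H (H ⊗[k] H))
          ((Algebra.TensorProduct.map Q.comul (AlgHom.id k (H ⊗[k] H))) Q.Phi)) = 1 := by
    have := congrArg Q.comul h1
    rw [hx]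
    simpa [aux2] using this
  simp only [map_mul] at hp
  rw [t1, t2, t3, t4, t5] at hp
  simpa using hp

end helpers

/-- If the smash-product-type multiplication on `A ⊗ H` is associative and `A` has a unit
`1_A` with `h·1_A = ε(h)1_A`, then `h·(ab) = (h₁·a)(h₂·b)`; consequently `A` is a left
`H`-module algebra (it also satisfies the quasi-associativity constraint). -/
theorem statement1 {k H A : Type*} [Field k] [Ring H] [Algebra k H]
    [AddCommGroup A] [Module k A] (Q : QuasiBialgebra k H)
    (act : H →ₗ[k] A →ₗ[k] A)
    (act_one : ∀ a : A, act 1 a = a)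
    (act_mul : ∀ (g h : H) (a : A), act (g * h) a = act g (act h a))
    (mulA : A →ₗ[k] A →ₗ[k] A)
    (oneA : A)
    (one_mulA : ∀ a : A, mulA oneA a = a)
    (mulA_one : ∀ a : A, mulA a oneA = a)
    (act_unit : ∀ h : H, act h oneA = Q.counit h • oneA)
    (mulB : (A ⊗[k] H) →ₗ[k] (A ⊗[k] H) →ₗ[k] (A ⊗[k] H))
    (hmulB : ∀ (a a' : A) (h h' : H) (n : ℕ) (x1 x2 x3 : Fin n → H),
      Q.PhiInv = ∑ i, x1 i ⊗ₜ[k] (x2 i ⊗ₜ[k] x3 i) →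
      ∀ (m : ℕ) (d1 d2 : Fin m → H), Q.comul h = ∑ j, d1 j ⊗ₜ[k] d2 j →
      mulB (a ⊗ₜ[k] h) (a' ⊗ₜ[k] h')
        = ∑ i, ∑ j, (mulA (act (x1 i) a) (act (x2 i * d1 j) a')) ⊗ₜ[k] (x3 i * d2 j * h'))
    (hassoc : ∀ u w z : A ⊗[k] H, mulB (mulB u w) z = mulB u (mulB w z)) :
    (∀ (h : H) (a b : A) (m : ℕ) (d1 d2 : Fin m → H),
      Q.comul h = ∑ j, d1 j ⊗ₜ[k] d2 j →
      act h (mulA a b) = ∑ j, mulA (act (d1 j) a) (act (d2 j) b))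
    ∧ (∀ (a b c : A) (n : ℕ) (X1 X2 X3 : Fin n → H),
      Q.Phi = ∑ i, X1 i ⊗ₜ[k] (X2 i ⊗ₜ[k] X3 i) →
      mulA (mulA a b) c
        = ∑ i, mulA (act (X1 i) a) (mulA (act (X2 i) b) (act (X3 i) c))) := by
  obtain ⟨n, x1, x2, x3, hx⟩ := exists_rep3 Q.PhiInv
  have hL := epsL_PhiInv Q
  have hT := epsT_PhiInv Q
  rw [hx] at hL hT
  simp only [map_sum, epsL_tmul] at hL
  simp only [map_sum, epsT, Algebra.TensorProduct.map_tmul, epsR_tmul, AlgHom.id_apply] at hT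
  have hone : Q.comul 1 = ∑ j : Fin 1, (1 : H) ⊗ₜ[k] (1 : H) := by
    simp [Algebra.TensorProduct.one_def]
  -- the projection `id ⊗ ε`
  let P : A ⊗[k] H →ₗ[k] A :=
    (TensorProduct.rid k A).toLinearMap ∘ₗ
      TensorProduct.map LinearMap.id Q.counit.toLinearMap
  have hP : ∀ (a : A) (h : H), P (a ⊗ₜ h) = Q.counit h • a := by
    intro a h; simp [P]
  have hxT : ∀ a b : A, ∑ i, Q.counit (x3 i) • mulA (act (x1 i) a) (act (x2 i) b)
      = mulA a b := by
    intro a b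
    have := congrArg (TensorProduct.lift mulA ∘ₗ
      TensorProduct.map (act.flip a) (act.flip b)) hT
    simpa [Algebra.TensorProduct.one_def, act_one] using this
  have key : ∀ (a b : A) (h h' : H),
      P (mulB (a ⊗ₜ h) (b ⊗ₜ h')) = Q.counit h' • mulA a (act h b) := by
    intro a b h h'
    obtain ⟨m, d1, d2, hd⟩ := exists_rep2 (Q.comul h)
    have hc : ∑ j, Q.counit (d2 j) • d1 j = h := by
      have := epsR_comul Q h
      rw [hd] at this
      simpa [epsR_tmul] using this
    rw [hmulB a b h h' n x1 x2 x3 hx m d1 d2 hd, ← hxT]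
    simp only [map_sum, hP, map_mul, Finset.smul_sum]
    refine Finset.sum_congr rfl fun i _ => ?_
    rw [← hc]
    simp only [map_sum, LinearMap.sum_apply, map_smul, LinearMap.smul_apply, Finset.smul_sum,
      smul_smul, act_mul]
    refine Finset.sum_congr rfl fun j _ => ?_
    congr 1
    ring
  have key2 : ∀ (a : A) (h : H) (u : A ⊗[k] H),
      P (mulB (a ⊗ₜ h) u) = mulA a (act h (P u)) := by
    intro a h u
    induction u with
    | zero => simp
    | tmul b g => rw [key, hP]; simp
    | add u v hu hv => simp only [map_add, hu, hv]
  constructor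
  · intro h a b m d1 d2 hd
    have e := congrArg P (hassoc (oneA ⊗ₜ h) (a ⊗ₜ 1) (b ⊗ₜ 1))
    rw [key2, key, one_mulA, act_one, map_one, one_smul,
      hmulB oneA a h 1 n x1 x2 x3 hx m d1 d2 hd] at e
    have e2 : ∑ i, ∑ j, (mulA (act (x1 i) oneA) (act (x2 i * d1 j) a)) ⊗ₜ[k]
        (x3 i * d2 j * 1) = ∑ j, act (d1 j) a ⊗ₜ[k] d2 j := by
      rw [Finset.sum_comm]
      refine Finset.sum_congr rfl fun j _ => ?_
      have := congrArg (TensorProduct.map (act.flip (act (d1 j) a))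
        (LinearMap.mulRight k (d2 j))) hL
      simpa [Algebra.TensorProduct.one_def, act_one, act_unit, act_mul, one_mulA,
        TensorProduct.smul_tmul'] using this
    rw [e2] at e
    simp only [map_sum, LinearMap.sum_apply, key, map_one, one_smul] at e
    exact e.symm
  · have q : ∀ a b c : A, ∑ i, mulA (mulA (act (x1 i) a) (act (x2 i) b)) (act (x3 i) c)
        = mulA a (mulA b c) := by
      intro a b c
      have e := congrArg P (hassoc (a ⊗ₜ 1) (b ⊗ₜ 1) (c ⊗ₜ 1))
      rw [key2, key, act_one, act_one, map_one, one_smul,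
        hmulB a b 1 1 n x1 x2 x3 hx 1 _ _ hone] at e
      simpa [key] using e
    intro a b c N X1 X2 X3 hX
    have hΦ := Q.inv_mul_Phi
    rw [hx, hX] at hΦ
    have := congrArg ((TensorProduct.lift (TensorProduct.lift (mulA.compr₂ mulA)) ∘ₗ
      (TensorProduct.assoc k A A A).symm.toLinearMap) ∘ₗ
      TensorProduct.map (act.flip a) (TensorProduct.map (act.flip b) (act.flip c))) hΦ
    simp only [← q]
    rw [Finset.sum_comm]
    simpa [Finset.sum_mul_sum, Algebra.TensorProduct.one_def, act_one, act_mul] using this.symm
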